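/- arXiv:1206.4586 — 4 statements merged into one kernel-verified Lean document; each statement's English description precedes it below -/
import Mathlib

section
/- Let ν be a probability measure on [0,1] and n ≥ 1. Let G_n be the random graph of Construction 2 on {1,…,n}, and let H_n = G(n,W) be the random graph defined by the kernel W on the probability space ([0,1]², μ_ν). Let π be a uniformly random permutation of {1,…,n}, independent of all randomness used to build G_n. Then the relabelled graph π·G_n (which has edge {π(i),π(j)} if and only if G_n has edge {i,j}) has the same distribution as H_n; in particular G_n and G(n,W) are equal in distribution as unlabelled graphs. -/
open MeasureTheory ProbabilityTheory Filter
open scoped ENNReal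

/-- Lebesgue measure on `[0,1]`, as a (probability) measure on `ℝ`. -/
noncomputable def unif01 : Measure ℝ := volume.restrict (Set.Icc (0 : ℝ) 1)

/-- The kernel `W` on `S = [0,1]²`:
`W((s₁,t₁),(s₂,t₂)) = s₂` if `t₁ < t₂`, `s₁` if `t₁ > t₂`, and `0` if `t₁ = t₂`. -/
noncomputable def Wker : ℝ × ℝ → ℝ × ℝ → ℝ := fun x y =>
  if x.2 < y.2 then y.1 else if y.2 < x.2 then x.1 else 0

/-- Sample space measure for Construction 2 on `n` vertices:
`θ₁,…,θ_n` i.i.d. with law `ν` and `(U_{ij})` i.i.d. `Uniform[0,1]`, all independent. -/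
noncomputable def con2Measure (n : ℕ) (ν : Measure ℝ) :
    Measure ((Fin n → ℝ) × (Fin n × Fin n → ℝ)) :=
  (Measure.pi fun _ => ν).prod (Measure.pi fun _ => unif01)

/-- Edge indicator of the Construction 2 graph `G_n`: for `i < j`,
the edge `{i,j}` is present iff `U_{ij} < θ_j`. -/
noncomputable def con2Edge (n : ℕ) (ω : (Fin n → ℝ) × (Fin n × Fin n → ℝ))
    (i j : Fin n) : Bool :=
  decide ((i < j ∧ ω.2 (i, j) < ω.1 j) ∨ (j < i ∧ ω.2 (j, i) < ω.1 i))

/-- Sample space measure for the random graph `G(n,W)` on the kernel `W` over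
`(S, μ_ν) = ([0,1]², ν × λ)`: `X₁,…,X_n` i.i.d. with law `μ_ν` and `(V_{ij})`
i.i.d. `Uniform[0,1]`, all independent. -/
noncomputable def kerMeasure (n : ℕ) (ν : Measure ℝ) :
    Measure ((Fin n → ℝ × ℝ) × (Fin n × Fin n → ℝ)) :=
  (Measure.pi fun _ => ν.prod unif01).prod (Measure.pi fun _ => unif01)

/-- Edge indicator of `G(n,W)`: for `i < j`, the edge `{i,j}` is present iff
`V_{ij} < W(X_i, X_j)`. -/
noncomputable def kerEdge (n : ℕ) (ω : (Fin n → ℝ × ℝ) × (Fin n × Fin n → ℝ))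
    (i j : Fin n) : Bool :=
  decide ((i < j ∧ ω.2 (i, j) < Wker (ω.1 i) (ω.1 j)) ∨
    (j < i ∧ ω.2 (j, i) < Wker (ω.1 j) (ω.1 i)))

instance (n : ℕ) : MeasurableSpace (Equiv.Perm (Fin n)) := ⊤

/-- The uniform distribution on the permutations of `{1,…,n}`. -/
noncomputable def permUniform (n : ℕ) : Measure (Equiv.Perm (Fin n)) :=
  (PMF.uniformOfFintype (Equiv.Perm (Fin n))).toMeasure

/-!
Sort the vertices of `G(n,W)` by their second coordinates `t₁,…,t_n`, which are almost surely
distinct. The sorting permutation `σ` is uniform and depends only on the `t_i`, hence is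
independent of the types `s_i` and of the edge variables. In sorted order the value of `W` at two
vertices is the type of the later one, which is the rule of Construction 2, so `G(n,W)` is the
relabelling by `σ` of the Construction 2 graph with types `s_{σ(i)}` and accordingly permuted edge
variables. Permuting i.i.d. variables by the independent `σ` leaves their law unchanged and
independent of `σ`.
-/

section IID

variable {ι κ α : Type*} [MeasurableSpace α]

lemma measurePreserving_comp_equiv [Fintype ι] [Fintype κ] (μ : Measure α) [SigmaFinite μ]
    (e : ι ≃ κ) :
    MeasurePreserving (fun f : κ → α => f ∘ e) (Measure.pi fun _ => μ) (Measure.pi fun _ => μ) :=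
  (measurePreserving_piCongrLeft (fun _ : κ => μ) e).symm

lemma ae_prod_fst_ne_snd [MeasurableEq α] (μ ν : Measure α) [SFinite ν] [NullSingletonClass ν] :
    ∀ᵐ p ∂μ.prod ν, p.1 ≠ p.2 := by
  refine (Measure.ae_prod_iff_ae_ae measurableSet_diagonal.compl).2 ?_
  filter_upwards with x
  filter_upwards [Measure.ae_ne ν x] with y hy using hy.symm

lemma ae_pi_injective [Fintype ι] [MeasurableEq α] (μ : ι → Measure α)
    [∀ i, IsProbabilityMeasure (μ i)] [∀ i, NullSingletonClass (μ i)] :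
    ∀ᵐ t ∂Measure.pi μ, Function.Injective t := by
  have ae_ne : ∀ i j, i ≠ j → ∀ᵐ t ∂Measure.pi μ, t i ≠ t j := by
    intro i j hij
    have indep : IndepFun (fun t : ι → α => t i) (fun t => t j) (Measure.pi μ) :=
      (iIndepFun_pi fun _ => aemeasurable_id).indepFun hij
    have joint_law :
        MeasurePreserving (fun t => (t i, t j)) (Measure.pi μ) ((μ i).prod (μ j)) := by
      refine ⟨by fun_prop, ?_⟩
      rw [indep.map_prod_eq_prod_map_map (measurable_pi_apply i).aemeasurable
          (measurable_pi_apply j).aemeasurable,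
        (measurePreserving_eval μ i).map_eq, (measurePreserving_eval μ j).map_eq]
    exact joint_law.quasiMeasurePreserving.ae (ae_prod_fst_ne_snd (μ i) (μ j))
  simp only [Function.Injective, ae_all_iff]
  intro i j
  by_cases hij : i = j
  · exact ae_of_all _ fun _ _ => hij
  · filter_upwards [ae_ne i j hij] with t ht h using absurd h ht

end IID

lemma measure_eq_toMeasure_uniformOfFintype {β : Type*} [Fintype β] [Nonempty β]
    [MeasurableSpace β] [MeasurableSingletonClass β] (μ : Measure β) [IsProbabilityMeasure μ]
    (h : ∀ a b, μ {a} = μ {b}) : μ = (PMF.uniformOfFintype β).toMeasure := by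
  refine Measure.ext_of_singleton fun a => ?_
  have total : Fintype.card β * μ {a} = 1 := calc
    Fintype.card β * μ {a} = ∑ b, μ {b} := by simp [h _ a]
    _ = 1 := by simp
  rw [PMF.toMeasure_apply_singleton _ _ (measurableSet_singleton a), PMF.uniformOfFintype_apply]
  exact ENNReal.eq_inv_of_mul_eq_one_left (by rwa [mul_comm])

section Sorting

variable {n : ℕ} {α : Type*} [LinearOrder α]

lemma sort_comp_perm {t : Fin n → α} (ht : Function.Injective t) (σ : Equiv.Perm (Fin n)) :
    Tuple.sort (t ∘ σ) = σ⁻¹ * Tuple.sort t := by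
  have h : t ∘ (σ * Tuple.sort (t ∘ σ)) = t ∘ Tuple.sort t :=
    Tuple.comp_perm_comp_sort_eq_comp_sort
  exact eq_inv_mul_of_mul_eq (Equiv.coe_fn_injective (ht.comp_left h))

lemma strictMono_comp_sort {t : Fin n → α} (ht : Function.Injective t) :
    StrictMono (t ∘ Tuple.sort t) :=
  (Tuple.monotone_sort t).strictMono_of_injective (ht.comp (Tuple.sort t).injective)

instance : DiscreteMeasurableSpace (Equiv.Perm (Fin n)) := ⟨fun _ => trivial⟩

variable [TopologicalSpace α] [OrderClosedTopology α] [SecondCountableTopology α]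
  [MeasurableSpace α] [OpensMeasurableSpace α]

lemma measurable_sort : Measurable (Tuple.sort : (Fin n → α) → Equiv.Perm (Fin n)) := by
  refine measurable_to_countable' fun σ => ?_
  have preimage_eq : Tuple.sort ⁻¹' {σ} = {t : Fin n → α |
      (∀ i j, i ≤ j → t (σ i) ≤ t (σ j)) ∧ ∀ i j, i < j → t (σ i) = t (σ j) → σ i < σ j} := by
    ext t
    exact eq_comm.trans Tuple.eq_sort_iff
  rw [preimage_eq]
  measurability

lemma measurePreserving_sort (μ : Measure α) [IsProbabilityMeasure μ] [NullSingletonClass μ] :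
    MeasurePreserving Tuple.sort (Measure.pi fun _ : Fin n => μ) (permUniform n) := by
  set P := Measure.pi fun _ : Fin n => μ
  have measure_preimage (σ : Equiv.Perm (Fin n)) :
      P (Tuple.sort ⁻¹' {σ}) = P (Tuple.sort ⁻¹' {1}) := by
    rw [← (measurePreserving_comp_equiv μ σ).measure_preimage
      (measurable_sort (measurableSet_singleton 1)).nullMeasurableSet]
    apply measure_congr
    filter_upwards [ae_pi_injective fun _ : Fin n => μ] with t ht
    change (Tuple.sort t = σ) = (Tuple.sort (t ∘ σ) = 1)
    rw [sort_comp_perm ht, inv_mul_eq_one, eq_comm (a := σ)]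
  have := Measure.isProbabilityMeasure_map (μ := P) (measurable_sort (α := α)).aemeasurable
  refine ⟨measurable_sort, measure_eq_toMeasure_uniformOfFintype _ fun σ τ => ?_⟩
  rw [Measure.map_apply measurable_sort (measurableSet_singleton σ),
    Measure.map_apply measurable_sort (measurableSet_singleton τ), measure_preimage σ,
    measure_preimage τ]

end Sorting

section PairPerm

variable {ι : Type*} [LinearOrder ι]

/-- The permutation of ordered pairs induced by a permutation `σ` of the indices, encoding the
action of `σ` on unordered pairs: the entries are swapped where needed for increasing pairs to go
to increasing pairs. -/
def pairPerm (σ : Equiv.Perm ι) : Equiv.Perm (ι × ι) where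
  toFun p := if p.1 < p.2 ↔ σ p.1 < σ p.2 then (σ p.1, σ p.2) else (σ p.2, σ p.1)
  invFun p := if p.1 < p.2 ↔ σ.symm p.1 < σ.symm p.2 then (σ.symm p.1, σ.symm p.2)
    else (σ.symm p.2, σ.symm p.1)
  left_inv p := by grind
  right_inv p := by grind

lemma pairPerm_inf_sup (σ : Equiv.Perm ι) (i j : ι) :
    pairPerm σ (i ⊓ j, i ⊔ j) = (σ i ⊓ σ j, σ i ⊔ σ j) := by
  simp only [pairPerm, Equiv.coe_fn_mk]
  grind

end PairPerm

section Edges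

variable {n : ℕ}

lemma con2Edge_eq_decide (ω : (Fin n → ℝ) × (Fin n × Fin n → ℝ)) (i j : Fin n) :
    con2Edge n ω i j = decide (i ≠ j ∧ ω.2 (i ⊓ j, i ⊔ j) < ω.1 (i ⊔ j)) := by
  rcases lt_trichotomy i j with h | rfl | h
  · simp [con2Edge, h, h.le, h.ne, h.not_gt]
  · simp [con2Edge]
  · simp [con2Edge, h, h.le, h.ne', h.not_gt]

lemma Wker_comm (x y : ℝ × ℝ) : Wker x y = Wker y x := by
  grind [Wker]

lemma kerEdge_eq_decide (ω : (Fin n → ℝ × ℝ) × (Fin n × Fin n → ℝ)) (i j : Fin n) :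
    kerEdge n ω i j = decide (i ≠ j ∧ ω.2 (i ⊓ j, i ⊔ j) < Wker (ω.1 i) (ω.1 j)) := by
  rcases lt_trichotomy i j with h | rfl | h
  · simp [kerEdge, h, h.le, h.ne, h.not_gt]
  · simp [kerEdge]
  · simp [kerEdge, h, h.le, h.ne', h.not_gt, Wker_comm]

lemma Wker_of_strictMono {ι : Type*} [LinearOrder ι] {X : ι → ℝ × ℝ}
    (hX : StrictMono fun i => (X i).2) {i j : ι} (hij : i ≠ j) :
    Wker (X i) (X j) = (X (i ⊔ j)).1 := by
  rcases hij.lt_or_gt with h | h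
  · rw [Wker, if_pos (hX h), sup_of_le_right h.le]
  · rw [Wker, if_neg (hX h).not_gt, if_pos (hX h), sup_of_le_left h.le]

lemma measurable_con2Edge (i j : Fin n) : Measurable fun ω => con2Edge n ω i j := by
  refine measurable_to_bool ?_
  simp only [con2Edge, Set.preimage, Set.mem_singleton_iff, decide_eq_true_eq]
  measurability

lemma measurable_con2Graph : Measurable
    fun (ω : Equiv.Perm (Fin n) × ((Fin n → ℝ) × (Fin n × Fin n → ℝ))) (a b : Fin n) =>
      con2Edge n ω.2 (ω.1.symm a) (ω.1.symm b) :=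
  measurable_from_prod_countable_right fun σ =>
    measurable_pi_lambda _ fun a => measurable_pi_lambda _ fun b =>
      measurable_con2Edge (σ.symm a) (σ.symm b)

end Edges

section Coupling

variable {n : ℕ}

instance : IsProbabilityMeasure unif01 := ⟨by simp [unif01]⟩

instance : NullSingletonClass unif01 := inferInstanceAs (NullSingletonClass (volume.restrict _))

instance : IsProbabilityMeasure (permUniform n) :=
  inferInstanceAs (IsProbabilityMeasure (PMF.toMeasure _))

instance (ν : Measure ℝ) [SigmaFinite ν] : SigmaFinite (con2Measure n ν) :=
  inferInstanceAs (SigmaFinite (Measure.prod _ _))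

/-- The action of a permutation of the vertices on the sample space of Construction 2. -/
def con2Reindex (σ : Equiv.Perm (Fin n)) (ω : (Fin n → ℝ) × (Fin n × Fin n → ℝ)) :
    (Fin n → ℝ) × (Fin n × Fin n → ℝ) :=
  (ω.1 ∘ σ, ω.2 ∘ pairPerm σ)

lemma measurePreserving_con2Reindex (ν : Measure ℝ) [SigmaFinite ν] (σ : Equiv.Perm (Fin n)) :
    MeasurePreserving (con2Reindex σ) (con2Measure n ν) (con2Measure n ν) :=
  (measurePreserving_comp_equiv ν σ).prod (measurePreserving_comp_equiv unif01 (pairPerm σ))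

lemma measurePreserving_kerMeasure_split (ν : Measure ℝ) [SigmaFinite ν] :
    MeasurePreserving (fun ω : (Fin n → ℝ × ℝ) × (Fin n × Fin n → ℝ) =>
        (Prod.snd ∘ ω.1, (Prod.fst ∘ ω.1, ω.2)))
      (kerMeasure n ν) ((Measure.pi fun _ => unif01).prod (con2Measure n ν)) := by
  have split_types :=
    measurePreserving_arrowProdEquivProdArrow ℝ ℝ (Fin n) (fun _ => ν) (fun _ => unif01)
  exact (measurePreserving_prodAssoc _ _ _).comp
    ((Measure.measurePreserving_swap.comp split_types).prod (MeasurePreserving.id _))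

/-- The coupling of `G(n,W)` with Construction 2: the permutation sorting the vertices by their
second coordinates, and the sample of Construction 2 read off in that order. -/
noncomputable def kerCoupling (ω : (Fin n → ℝ × ℝ) × (Fin n × Fin n → ℝ)) :
    Equiv.Perm (Fin n) × ((Fin n → ℝ) × (Fin n × Fin n → ℝ)) :=
  (Tuple.sort (Prod.snd ∘ ω.1), con2Reindex (Tuple.sort (Prod.snd ∘ ω.1)) (Prod.fst ∘ ω.1, ω.2))

lemma measurePreserving_kerCoupling (ν : Measure ℝ) [SigmaFinite ν] :
    MeasurePreserving kerCoupling (kerMeasure n ν) ((permUniform n).prod (con2Measure n ν)) := by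
  have sort_times := ((measurePreserving_sort unif01).prod
    (MeasurePreserving.id (con2Measure n ν))).comp (measurePreserving_kerMeasure_split ν)
  have reindex := (MeasurePreserving.id (permUniform n)).skew_product
    (measurable_from_prod_countable_right fun σ => (measurePreserving_con2Reindex ν σ).measurable)
    (ae_of_all _ fun σ => (measurePreserving_con2Reindex ν σ).map_eq)
  exact reindex.comp sort_times

lemma con2Edge_kerCoupling {ω : (Fin n → ℝ × ℝ) × (Fin n × Fin n → ℝ)}
    (hω : Function.Injective (Prod.snd ∘ ω.1)) (a b : Fin n) :
    con2Edge n (kerCoupling ω).2 ((kerCoupling ω).1.symm a) ((kerCoupling ω).1.symm b)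
      = kerEdge n ω a b := by
  set σ := (kerCoupling ω).1
  obtain ⟨i, rfl⟩ := σ.surjective a
  obtain ⟨j, rfl⟩ := σ.surjective b
  rw [σ.symm_apply_apply, σ.symm_apply_apply, con2Edge_eq_decide, kerEdge_eq_decide,
    decide_eq_decide, σ.injective.ne_iff]
  refine and_congr_right fun hij => ?_
  have edge_variable : (kerCoupling ω).2.2 (i ⊓ j, i ⊔ j) = ω.2 (σ i ⊓ σ j, σ i ⊔ σ j) :=
    congrArg ω.2 (pairPerm_inf_sup σ i j)
  have kernel_value : Wker (ω.1 (σ i)) (ω.1 (σ j)) = (kerCoupling ω).2.1 (i ⊔ j) :=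
    Wker_of_strictMono (X := ω.1 ∘ σ) (strictMono_comp_sort hω) hij
  rw [edge_variable, kernel_value]

lemma ae_kerMeasure_injective (ν : Measure ℝ) [SigmaFinite ν] :
    ∀ᵐ ω ∂kerMeasure n ν, Function.Injective (Prod.snd ∘ ω.1) :=
  (measurePreserving_kerMeasure_split ν).quasiMeasurePreserving.ae
    (Measure.quasiMeasurePreserving_fst.ae (ae_pi_injective fun _ => unif01))

end Coupling

theorem stmt0_general (ν : Measure ℝ) [SigmaFinite ν] (n : ℕ) :
    Measure.map
        (fun ω : Equiv.Perm (Fin n) × ((Fin n → ℝ) × (Fin n × Fin n → ℝ)) =>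
          fun a b : Fin n => con2Edge n ω.2 (ω.1.symm a) (ω.1.symm b))
        ((permUniform n).prod (con2Measure n ν))
      = Measure.map (fun ω => fun a b : Fin n => kerEdge n ω a b) (kerMeasure n ν) := by
  have coupling := measurePreserving_kerCoupling (n := n) ν
  rw [← coupling.map_eq, Measure.map_map measurable_con2Graph coupling.measurable]
  apply Measure.map_congr
  filter_upwards [ae_kerMeasure_injective ν] with ω hω
  funext a b
  exact con2Edge_kerCoupling hω a b

/-- Let `ν` be a probability measure on `[0,1]` and `n ≥ 1`. If `π` is a
uniformly random permutation of `{1,…,n}`, independent of the randomness building the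
Construction 2 graph `G_n`, then the relabelled graph `π·G_n` (with edge `{π i, π j}` iff
`G_n` has edge `{i,j}`, i.e. edge `{a,b}` iff `G_n` has edge `{π⁻¹ a, π⁻¹ b}`) has the same
distribution as `G(n,W)`; in particular `G_n` and `G(n,W)` are equal in distribution as
unlabelled graphs. -/
theorem stmt0 (ν : Measure ℝ) [IsProbabilityMeasure ν] (hν : ν (Set.Icc 0 1) = 1)
    (n : ℕ) (hn : 1 ≤ n) :
    Measure.map
        (fun ω : Equiv.Perm (Fin n) × ((Fin n → ℝ) × (Fin n × Fin n → ℝ)) =>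
          fun a b : Fin n => con2Edge n ω.2 (ω.1.symm a) (ω.1.symm b))
        ((permUniform n).prod (con2Measure n ν))
      = Measure.map (fun ω => fun a b : Fin n => kerEdge n ω a b) (kerMeasure n ν) :=
  stmt0_general ν n
end

section
/- Let ν be a probability measure on [0,1], and for each n ≥ 1 let D_n be a random variable with the mixed binomial distribution P(D_n = k) = C(n−1,k) ∫₀¹ θ^k (1−θ)^{n−1−k} dν(θ) for 0 ≤ k ≤ n−1. Then D_n/n converges in distribution to ν as n → ∞, i.e. the law of D_n/n converges weakly to ν. -/
/-!
Integrating a function `f` against the law of `D_{n+1} / (n + 1)` amounts to integrating against `ν`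
the polynomial `θ ↦ ∑ k, C(n, k) θ ^ k (1 - θ) ^ (n - k) f (k / (n + 1))`. This is the `n`-th
Bernstein approximation of `x ↦ f (n / (n + 1) * x)`, because `n / (n + 1)` times the node `k / n`
is `k / (n + 1)`. These rescaled functions converge to `f` uniformly on `[0, 1]`, and Bernstein
approximation is `1`-Lipschitz for the uniform norm, so Bernstein's theorem shows that the
polynomials converge uniformly to `f`; their integrals against the finite measure `ν` then
converge.
-/

open MeasureTheory Filter
open scoped ENNReal

/-- The law of `D_n / n`, where `D_n` has the mixed binomial distribution
`P(D_n = k) = C(n−1,k) ∫₀¹ θ^k (1−θ)^{n−1−k} dν(θ)`, `0 ≤ k ≤ n−1`. -/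
noncomputable def lawDnDivN (ν : Measure ℝ) (n : ℕ) : Measure ℝ :=
  ∑ k ∈ Finset.range n,
    ENNReal.ofReal (((n - 1).choose k : ℝ) * ∫ θ, θ ^ k * (1 - θ) ^ (n - 1 - k) ∂ν) •
      Measure.dirac ((k : ℝ) / n)

open scoped unitInterval Topology

section BernsteinApproximation

variable {E : Type*} [NormedAddCommGroup E] [NormedSpace ℝ E]

theorem lipschitzWith_bernsteinApproximation (n : ℕ) :
    LipschitzWith 1 (bernsteinApproximation n : C(I, E) → C(I, E)) := by
  refine LipschitzWith.of_dist_le_mul fun F G => ?_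
  rw [NNReal.coe_one, one_mul, ContinuousMap.dist_le dist_nonneg]
  intro x
  rw [bernsteinApproximation.apply, bernsteinApproximation.apply]
  calc dist (∑ k : Fin (n + 1), bernstein n k x • F (bernstein.z k))
        (∑ k : Fin (n + 1), bernstein n k x • G (bernstein.z k))
      ≤ ∑ k : Fin (n + 1), bernstein n k x * dist F G := by
        refine dist_sum_sum_le_of_le _ fun k _ => ?_
        rw [dist_smul₀, Real.norm_of_nonneg bernstein_nonneg]
        gcongr
        exact ContinuousMap.dist_apply_le_dist _
    _ = dist F G := by rw [← Finset.sum_mul, bernstein.probability, one_mul]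

theorem tendsto_bernsteinApproximation {u : ℕ → C(I, E)} {F : C(I, E)}
    (hu : Tendsto u atTop (𝓝 F)) :
    Tendsto (fun n => bernsteinApproximation n (u n)) atTop (𝓝 F) := by
  refine tendsto_of_tendsto_of_dist (bernsteinApproximation_uniform F) ?_
  have h_dist : Tendsto (fun n => dist F (u n)) atTop (𝓝 0) := by
    simpa only [dist_self] using (tendsto_const_nhds (x := F)).dist hu
  refine squeeze_zero (fun _ => dist_nonneg) (fun n => ?_) h_dist
  simpa only [NNReal.coe_one, one_mul] using
    (lipschitzWith_bernsteinApproximation n).dist_le_mul F (u n)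

theorem integral_bernsteinApproximation [CompleteSpace E] (μ : Measure I) [IsFiniteMeasure μ]
    (n : ℕ) (F : C(I, E)) :
    ∫ x, bernsteinApproximation n F x ∂μ =
      ∑ k : Fin (n + 1), (∫ x, bernstein n k x ∂μ) • F (bernstein.z k) := by
  have h_int (k : Fin (n + 1)) : Integrable (bernstein n k) μ :=
    (bernstein n k).continuous.integrable_of_hasCompactSupport (HasCompactSupport.of_compactSpace _)
  simp only [bernsteinApproximation.apply]
  rw [integral_finsetSum _ fun k _ => (h_int k).smul_const (F (bernstein.z k))]
  simp only [integral_smul_const]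

end BernsteinApproximation

theorem continuous_integral_coe_continuousMap {X E : Type*} [TopologicalSpace X] [CompactSpace X]
    [MeasurableSpace X] [BorelSpace X] [NormedAddCommGroup E] [NormedSpace ℝ E]
    [SecondCountableTopologyEither X E] (μ : Measure X) [IsFiniteMeasure μ] :
    Continuous fun F : C(X, E) => ∫ x, F x ∂μ := by
  have h_toLp (F : C(X, E)) : ∫ x, ContinuousMap.toLp 1 μ ℝ F x ∂μ = ∫ x, F x ∂μ :=
    integral_congr_ae (ContinuousMap.coeFn_toLp μ F)
  simpa only [h_toLp, Function.comp_def] using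
    continuous_integral.comp (ContinuousMap.toLp (E := E) 1 μ ℝ).continuous

theorem integral_subtype_comap_of_ae_mem {α E : Type*} [MeasurableSpace α] [NormedAddCommGroup E]
    [NormedSpace ℝ E] {μ : Measure α} {s : Set α} (hs : MeasurableSet s) (hμ : ∀ᵐ x ∂μ, x ∈ s)
    (f : α → E) : ∫ x : s, f x ∂(μ.comap (↑)) = ∫ x, f x ∂μ := by
  rw [integral_subtype_comap hs, Measure.restrict_eq_self_of_ae_mem hμ]

section NodeRescaling

/-- The factor `n / (n + 1)` by which the atoms `k / (n + 1)` of `lawDnDivN ν (n + 1)` differ from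
the Bernstein nodes `k / n`. -/
noncomputable def nodeRatio (n : ℕ) : I :=
  ⟨n / (n + 1), unitInterval.div_mem n.cast_nonneg (by positivity) (by linarith)⟩

theorem tendsto_nodeRatio : Tendsto nodeRatio atTop (𝓝 1) :=
  tendsto_subtype_rng.2 (tendsto_natCast_div_add_atTop (1 : ℝ))

/-- The contraction `x ↦ n / (n + 1) * x` of the unit interval, which moves the Bernstein nodes
to the atoms of `lawDnDivN ν (n + 1)`. -/
noncomputable def nodeRescaling (n : ℕ) : C(I, I) :=
  ContinuousMap.const I (nodeRatio n) * ContinuousMap.id I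

theorem coe_nodeRescaling_z {n : ℕ} (k : Fin (n + 1)) :
    (nodeRescaling n (bernstein.z k) : ℝ) = k / (n + 1 : ℕ) := by
  have h_mul : (nodeRescaling n (bernstein.z k) : ℝ) = n / (n + 1) * (k / n) := rfl
  rw [h_mul, Nat.cast_succ]
  rcases eq_or_ne n 0 with rfl | hn
  · simp [Fin.fin_one_eq_zero k]
  · field_simp

theorem tendsto_nodeRescaling : Tendsto nodeRescaling atTop (𝓝 (ContinuousMap.id I)) := by
  have h_const : Tendsto (fun n => ContinuousMap.const I (nodeRatio n)) atTop (𝓝 1) :=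
    (ContinuousMap.continuous_const'.tendsto 1).comp tendsto_nodeRatio
  rw [← one_mul (ContinuousMap.id I)]
  exact h_const.mul_const _

end NodeRescaling

section MixedBinomial

variable {ν : Measure ℝ}

theorem integral_bernstein_comap (hν : ∀ᵐ θ ∂ν, θ ∈ I) (n k : ℕ) :
    ∫ x, bernstein n k x ∂(ν.comap (↑)) =
      n.choose k * ∫ θ, θ ^ k * (1 - θ) ^ (n - k) ∂ν := by
  simp only [bernstein_apply, mul_assoc]
  rw [integral_const_mul, integral_subtype_comap_of_ae_mem measurableSet_Icc hν
    fun θ => θ ^ k * (1 - θ) ^ (n - k)]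

variable {E : Type*} [NormedAddCommGroup E] [NormedSpace ℝ E] [CompleteSpace E]

theorem integral_lawDnDivN_succ (hν : ∀ᵐ θ ∂ν, θ ∈ I) (n : ℕ) (f : ℝ → E) :
    ∫ x, f x ∂(lawDnDivN ν (n + 1)) =
      ∑ k : Fin (n + 1), (∫ x, bernstein n k x ∂(ν.comap (↑))) • f (k / (n + 1 : ℕ)) := by
  have h_nonneg (k : ℕ) : 0 ≤ ∫ x, bernstein n k x ∂(ν.comap (↑)) :=
    integral_nonneg fun _ => bernstein_nonneg
  simp only [lawDnDivN, Nat.add_sub_cancel, ← integral_bernstein_comap hν]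
  rw [integral_finsetSum_measure fun k _ =>
    (integrable_dirac enorm_lt_top).smul_measure ENNReal.ofReal_ne_top, Finset.sum_range]
  simp only [integral_smul_measure, integral_dirac, ENNReal.toReal_ofReal (h_nonneg _)]

theorem integral_lawDnDivN_succ_eq_integral_bernsteinApproximation [IsFiniteMeasure ν]
    (hν : ∀ᵐ θ ∂ν, θ ∈ I) (n : ℕ) {f : ℝ → E} {F : C(I, E)} (hF : ∀ x : I, F x = f x) :
    ∫ x, f x ∂(lawDnDivN ν (n + 1)) =
      ∫ x, bernsteinApproximation n (F.comp (nodeRescaling n)) x ∂(ν.comap (↑)) := by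
  simp only [integral_lawDnDivN_succ hν, integral_bernsteinApproximation,
    ContinuousMap.comp_apply, hF, coe_nodeRescaling_z]

end MixedBinomial

theorem stmt2_general {E : Type*} [NormedAddCommGroup E] [NormedSpace ℝ E] [CompleteSpace E]
    {ν : Measure ℝ} [IsFiniteMeasure ν] (hν : ∀ᵐ θ ∂ν, θ ∈ I) {f : ℝ → E}
    (hf : ContinuousOn f I) :
    Tendsto (fun n => ∫ x, f x ∂(lawDnDivN ν n)) atTop (𝓝 (∫ x, f x ∂ν)) := by
  let F : C(I, E) := ⟨Set.domRestrict I f, hf.domRestrict⟩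
  have hF (x : I) : F x = f x := rfl
  have h_rescaled : Tendsto (fun n => F.comp (nodeRescaling n)) atTop (𝓝 F) := by
    simpa only [F.comp_id, Function.comp_def] using
      (F.continuous_postcomp.tendsto _).comp tendsto_nodeRescaling
  have h_bernstein := tendsto_bernsteinApproximation h_rescaled
  rw [← tendsto_add_atTop_iff_nat 1, ← integral_subtype_comap_of_ae_mem measurableSet_Icc hν f]
  simp only [integral_lawDnDivN_succ_eq_integral_bernsteinApproximation hν _ hF]
  exact ((continuous_integral_coe_continuousMap (ν.comap (↑))).tendsto F).comp h_bernstein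

/-- Let `ν` be a probability measure on `[0,1]` and let `D_n` have the mixed
binomial distribution `P(D_n = k) = C(n−1,k) ∫₀¹ θ^k (1−θ)^{n−1−k} dν(θ)` for `0 ≤ k ≤ n−1`.
Then `D_n/n` converges in distribution to `ν` as `n → ∞`: the law of `D_n/n` converges weakly
to `ν`, i.e. integrals of bounded continuous functions converge. -/
theorem stmt2 (ν : Measure ℝ) [IsProbabilityMeasure ν] (hν : ν (Set.Icc 0 1) = 1) :
    ∀ f : BoundedContinuousFunction ℝ ℝ,
      Tendsto (fun n => ∫ x, f x ∂(lawDnDivN ν n)) atTop (nhds (∫ x, f x ∂ν)) := by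
  intro f
  exact stmt2_general ((mem_ae_iff_prob_eq_one measurableSet_Icc).2 hν) f.continuous.continuousOn
end

section
/- Let G_n be the random graph of Construction 1 on {1,…,n} built from distributions ν_k, with D_k = |S_k|. Let F be a finite simple graph on {1,…,m}, σ a permutation of {1,…,m}, and d_j = d_j(F_σ) = #{i < j : {i,j} ∈ E(F_σ)} the indegree of j in F_σ. Then E[n_≤(F_σ, G_n)] = Σ ∏_{j=1}^m E[(D_{φ(j)})_{d_j}] / ((φ(j)−1)_{d_j}), where the sum is over all strictly increasing maps φ : {1,…,m} → {1,…,n} (i.e. 1 ≤ φ(1) < φ(2) < ⋯ < φ(m) ≤ n), with the convention D_1 = 0. -/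
open MeasureTheory Filter
open scoped ENNReal

instance (n : ℕ) : MeasurableSpace (Finset (Fin n)) := ⊤

/-- The law of the random neighbourhood set `S_v ⊆ {i : i < v}` of vertex `v` in
Construction 1: `P(S_v = A) = q_v(|A|) / C(v, |A|)` for `A ⊆ {i : i < v}` (`v` has `v`
predecessors since vertices are 0-indexed; `q v` is the indegree distribution of `v`,
supported on `{0,…,v}`). -/
noncomputable def nbhdMeasure (n : ℕ) (q : ℕ → ℕ → ℝ≥0∞) (v : Fin n) :
    Measure (Finset (Fin n)) :=
  ∑ A : Finset (Fin n),
    (if A ⊆ Finset.Iio v then q v A.card / ((v : ℕ).choose A.card : ℝ≥0∞) else 0) •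
      Measure.dirac A

/-- The joint law of the independent random sets `S_v`, `v` a vertex of `G_n`. -/
noncomputable def con1Measure (n : ℕ) (q : ℕ → ℕ → ℝ≥0∞) :
    Measure (Fin n → Finset (Fin n)) :=
  Measure.pi fun v => nbhdMeasure n q v

/-- The graph `G_n` of Construction 1: for `i < k`, the edge `{i,k}` is present
iff `i ∈ S_k`. -/
def graphOf {n : ℕ} (ω : Fin n → Finset (Fin n)) : SimpleGraph (Fin n) where
  Adj i j := (i < j ∧ i ∈ ω j) ∨ (j < i ∧ j ∈ ω i)
  symm := ⟨fun _ _ h => h.symm⟩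
  loopless := ⟨fun i h => by rcases h with ⟨h, -⟩ | ⟨h, -⟩ <;> exact absurd h (lt_irrefl i)⟩

/-- `F_σ`: the graph `F` with vertices relabelled by `i ↦ σ i`. -/
def relabel {m : ℕ} (σ : Equiv.Perm (Fin m)) (F : SimpleGraph (Fin m)) : SimpleGraph (Fin m) where
  Adj i j := F.Adj (σ.symm i) (σ.symm j)
  symm := ⟨fun _ _ h => F.symm.symm _ _ h⟩
  loopless := ⟨fun _ h => F.loopless.irrefl _ h⟩

/-- `d_j(F) = #{i < j : {i,j} ∈ E(F)}`, the indegree of `j` when edges are directed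
towards the larger endpoint. -/
noncomputable def indeg {m : ℕ} (F : SimpleGraph (Fin m)) (j : Fin m) : ℕ :=
  Nat.card {i : Fin m // i < j ∧ F.Adj i j}

/-- `n_≤(F,G)`: the number of strictly increasing homomorphisms `F → G`. -/
noncomputable def incHomCount {m n : ℕ} (F : SimpleGraph (Fin m)) (G : SimpleGraph (Fin n)) : ℕ :=
  Nat.card {φ : Fin m → Fin n // StrictMono φ ∧ ∀ i j, F.Adj i j → G.Adj (φ i) (φ j)}

open scoped Classical in
/-- The strictly increasing maps `{1,…,m} → {1,…,n}`. -/
noncomputable def incMaps (m n : ℕ) : Finset (Fin m → Fin n) :=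
  Finset.univ.filter StrictMono

/-!
By linearity the expected count is the sum over increasing `φ` of the probability that `φ` is a
homomorphism. As `φ` is increasing, this event says that for every `j` the random set of `φ j`
contains the `φ`-image of the `d_j` smaller neighbours of `j`; these conditions involve distinct,
hence independent, random sets. Finally, if a random subset `A` of an `N`-set is uniform given its
size, a fixed `d`-subset lies in `A` with probability `E[(|A|)_d] / (N)_d`.
-/

section CardWeight

open Finset

variable {α : Type*} {T : Finset α}

theorem choose_sub_mul_descFactorial (n : ℕ) {k t : ℕ} (h : t ≤ k) :
    (n - t).choose (k - t) * n.descFactorial t = n.choose k * k.descFactorial t := by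
  calc (n - t).choose (k - t) * n.descFactorial t
      = t.factorial * (n.choose t * (n - t).choose (k - t)) := by
        rw [Nat.descFactorial_eq_factorial_mul_choose]; ring
    _ = t.factorial * (n.choose k * k.choose t) := by rw [Nat.choose_mul h]
    _ = n.choose k * k.descFactorial t := by
        rw [Nat.descFactorial_eq_factorial_mul_choose]; ring

theorem card_filter_superset_mul_descFactorial [DecidableEq α] {V : Finset α} (hT : T ⊆ V) (k : ℕ) :
    #{A ∈ powersetCard k V | T ⊆ A} * (#V).descFactorial #T
      = (#V).choose k * k.descFactorial #T := by
  rcases le_or_gt #T k with hk | hk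
  · rw [card_filter_powersetCard_subset _ _ _ hT hk, choose_sub_mul_descFactorial _ hk]
  · have hempty : {A ∈ powersetCard k V | T ⊆ A} = ∅ :=
      filter_eq_empty_iff.2 fun A hA hTA =>
        hk.not_ge ((mem_powersetCard.1 hA).2 ▸ card_le_card hTA)
    rw [hempty, card_empty, zero_mul, Nat.descFactorial_eq_zero_iff_lt.2 hk, mul_zero]

/-- The law, up to normalisation, of a random subset of `V` that is uniform given its size. Here
`w k` is the mass of each single `k`-element subset of `V`, not the mass of the event `|A| = k`. -/
noncomputable def cardWeightMeasure [MeasurableSpace (Finset α)] (V : Finset α) (w : ℕ → ℝ≥0∞) :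
    Measure (Finset α) :=
  ∑ A ∈ V.powerset, w #A • Measure.dirac A

namespace cardWeightMeasure

variable [MeasurableSpace (Finset α)] (V : Finset α) (w : ℕ → ℝ≥0∞)

theorem apply_univ :
    cardWeightMeasure V w Set.univ = ∑ A ∈ V.powerset, w #A := by
  simp [cardWeightMeasure, Measure.finsetSum_apply]

theorem weight_ne_top [IsFiniteMeasure (cardWeightMeasure V w)] {A : Finset α}
    (hA : A ∈ V.powerset) : w #A ≠ ∞ := by
  refine ne_top_of_le_ne_top (measure_ne_top (cardWeightMeasure V w) Set.univ) ?_
  rw [apply_univ]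
  exact single_le_sum (f := fun A => w #A) (fun _ _ => zero_le) hA

variable [DiscreteMeasurableSpace (Finset α)] [IsFiniteMeasure (cardWeightMeasure V w)]

theorem integral_eq_sum (f : Finset α → ℝ) :
    ∫ A, f A ∂(cardWeightMeasure V w)
      = ∑ k ∈ range (#V + 1), (w k).toReal * ∑ A ∈ powersetCard k V, f A := by
  have hint (A : Finset α) (hA : A ∈ V.powerset) : Integrable f (w #A • Measure.dirac A) :=
    (integrable_dirac enorm_lt_top).smul_measure (weight_ne_top V w hA)
  rw [cardWeightMeasure, integral_finsetSum_measure hint, sum_powerset]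
  refine sum_congr rfl fun k _ => ?_
  rw [mul_sum]
  refine sum_congr rfl fun A hA => ?_
  rw [integral_smul_measure, integral_dirac, smul_eq_mul, (mem_powersetCard.1 hA).2]

theorem integral_descFactorial_card (t : ℕ) :
    ∫ A, ((#A).descFactorial t : ℝ) ∂(cardWeightMeasure V w)
      = ∑ k ∈ range (#V + 1), (w k).toReal * ((#V).choose k * k.descFactorial t : ℕ) := by
  rw [integral_eq_sum]
  refine sum_congr rfl fun k _ => ?_
  rw [sum_powersetCard k V fun k => (k.descFactorial t : ℝ), nsmul_eq_mul, Nat.cast_mul]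

theorem measureReal_superset_eq_sum [DecidableEq α] (T : Finset α) :
    (cardWeightMeasure V w).real {A | T ⊆ A}
      = ∑ k ∈ range (#V + 1), (w k).toReal * #{A ∈ powersetCard k V | T ⊆ A} := by
  rw [← integral_indicator_one .of_discrete, integral_eq_sum]
  simp [Set.indicator_apply, sum_boole]

theorem measureReal_superset (hT : T ⊆ V) :
    (cardWeightMeasure V w).real {A | T ⊆ A}
      = (∫ A, ((#A).descFactorial #T : ℝ) ∂(cardWeightMeasure V w))
          / (#V).descFactorial #T := by
  classical
  have hne : ((#V).descFactorial #T : ℝ) ≠ 0 :=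
    Nat.cast_ne_zero.2 (Nat.descFactorial_pos.2 (card_le_card hT)).ne'
  rw [eq_div_iff hne, measureReal_superset_eq_sum, integral_descFactorial_card, sum_mul]
  refine sum_congr rfl fun k _ => ?_
  rw [← card_filter_superset_mul_descFactorial hT, Nat.cast_mul, mul_assoc]

end cardWeightMeasure

end CardWeight

section Neighbourhoods

variable {n : ℕ} (q : ℕ → ℕ → ℝ≥0∞) (v : Fin n)

theorem nbhdMeasure_eq_cardWeightMeasure :
    nbhdMeasure n q v
      = cardWeightMeasure (Finset.Iio v) fun k => q v k / ((v : ℕ).choose k : ℝ≥0∞) := by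
  have hpowerset :
      ({A | A ⊆ Finset.Iio v} : Finset (Finset (Fin n))) = (Finset.Iio v).powerset := by
    ext; simp
  simp only [nbhdMeasure, cardWeightMeasure, ite_smul, zero_smul, ← Finset.sum_filter, hpowerset]

theorem nbhdMeasure_univ :
    nbhdMeasure n q v Set.univ = ∑ d ∈ Finset.range (v + 1), q v d := by
  rw [nbhdMeasure_eq_cardWeightMeasure, cardWeightMeasure.apply_univ,
    Finset.sum_powerset_apply_card (fun k => q v k / ((v : ℕ).choose k : ℝ≥0∞)), Fin.card_Iio]
  refine Finset.sum_congr rfl fun d hd => ?_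
  rw [nsmul_eq_mul]
  refine ENNReal.mul_div_cancel ?_ (ENNReal.natCast_ne_top _)
  exact Nat.cast_ne_zero.2 (Nat.choose_pos (Finset.mem_range_succ_iff.1 hd)).ne'

theorem nbhdMeasure_real_superset [IsFiniteMeasure (nbhdMeasure n q v)] {T : Finset (Fin n)}
    (hT : T ⊆ Finset.Iio v) :
    (nbhdMeasure n q v).real {A | T ⊆ A}
      = (∫ A, (A.card.descFactorial T.card : ℝ) ∂(nbhdMeasure n q v))
          / (v : ℕ).descFactorial T.card := by
  have hμ := nbhdMeasure_eq_cardWeightMeasure q v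
  have : IsFiniteMeasure (cardWeightMeasure (Finset.Iio v) fun k =>
      q v k / ((v : ℕ).choose k : ℝ≥0∞)) := hμ ▸ inferInstance
  rw [hμ, cardWeightMeasure.measureReal_superset _ _ hT, Fin.card_Iio]

end Neighbourhoods

theorem measureReal_pi_forall_mem_of_injective {ι κ : Type*} [Fintype ι] [Fintype κ]
    {X : ι → Type*} [∀ i, MeasurableSpace (X i)] (μ : ∀ i, Measure (X i))
    [∀ i, IsProbabilityMeasure (μ i)] {φ : κ → ι} (hφ : φ.Injective) {s : ∀ j, Set (X (φ j))}
    (hs : ∀ j, MeasurableSet (s j)) :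
    (Measure.pi μ).real {ω | ∀ j, ω (φ j) ∈ s j} = ∏ j, (μ (φ j)).real (s j) := by
  have hindep : ProbabilityTheory.iIndepFun (fun j (ω : ∀ i, X i) => ω (φ j)) (Measure.pi μ) :=
    (ProbabilityTheory.iIndepFun_pi (X := fun _ => id) fun _ => aemeasurable_id).precomp hφ
  have hmarginal (j : κ) : Measure.pi μ ((fun ω => ω (φ j)) ⁻¹' s j) = μ (φ j) (s j) :=
    (measurePreserving_eval μ (φ j)).measure_preimage (hs j).nullMeasurableSet
  have hset : {ω : ∀ i, X i | ∀ j, ω (φ j) ∈ s j} = ⋂ j, (fun ω => ω (φ j)) ⁻¹' s j := by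
    ext; simp
  rw [hset, Measure.real, hindep.meas_iInter fun j => ⟨s j, hs j, rfl⟩,
    ENNReal.toReal_prod]
  exact Finset.prod_congr rfl fun j _ => congrArg ENNReal.toReal (hmarginal j)

section IncreasingHoms

variable {m n : ℕ} (H : SimpleGraph (Fin m)) {φ : Fin m → Fin n}

open scoped Classical in
/-- The neighbours of `j` in `H` that are smaller than `j`; `indeg H j` counts them. -/
noncomputable def lowerNbrs (j : Fin m) : Finset (Fin m) :=
  {i | i < j ∧ H.Adj i j}

theorem mem_lowerNbrs {i j : Fin m} : i ∈ lowerNbrs H j ↔ i < j ∧ H.Adj i j := by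
  simp [lowerNbrs]

theorem card_lowerNbrs (j : Fin m) : (lowerNbrs H j).card = indeg H j := by
  classical
  rw [indeg, Nat.card_eq_fintype_card, Fintype.card_subtype, lowerNbrs]

theorem image_lowerNbrs_subset_Iio (hφ : StrictMono φ) (j : Fin m) :
    (lowerNbrs H j).image φ ⊆ Finset.Iio (φ j) :=
  Finset.image_subset_iff.2 fun _ hi => Finset.mem_Iio.2 (hφ ((mem_lowerNbrs H).1 hi).1)

theorem graphOf_adj_of_lt {ω : Fin n → Finset (Fin n)} {i k : Fin n} (h : i < k) :
    (graphOf ω).Adj i k ↔ i ∈ ω k := by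
  simp [graphOf, h, h.not_gt]

theorem forall_adj_graphOf_iff (hφ : StrictMono φ) (ω : Fin n → Finset (Fin n)) :
    (∀ i j, H.Adj i j → (graphOf ω).Adj (φ i) (φ j)) ↔
      ∀ j, (lowerNbrs H j).image φ ⊆ ω (φ j) := by
  simp only [Finset.image_subset_iff, mem_lowerNbrs, and_imp]
  constructor
  · intro h j i hij hadj
    exact (graphOf_adj_of_lt (hφ hij)).1 (h i j hadj)
  · intro h i j hadj
    rcases hadj.ne.lt_or_gt with hij | hji
    · exact (graphOf_adj_of_lt (hφ hij)).2 (h j i hij hadj)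
    · exact ((graphOf_adj_of_lt (hφ hji)).2 (h i j hji hadj.symm)).symm

theorem mem_incMaps : φ ∈ incMaps m n ↔ StrictMono φ := by
  simp [incMaps]

open scoped Classical in
theorem incHomCount_graphOf (ω : Fin n → Finset (Fin n)) :
    incHomCount H (graphOf ω)
      = ((incMaps m n).filter fun φ => ∀ j, (lowerNbrs H j).image φ ⊆ ω (φ j)).card := by
  rw [incHomCount, Nat.card_eq_fintype_card, Fintype.card_subtype, incMaps, Finset.filter_filter]
  exact congrArg Finset.card <| Finset.filter_congr fun φ _ =>
    and_congr_right fun hφ => forall_adj_graphOf_iff H hφ ω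

theorem integral_incHomCount_graphOf (P : Measure (Fin n → Finset (Fin n))) [IsFiniteMeasure P] :
    ∫ ω, (incHomCount H (graphOf ω) : ℝ) ∂P
      = ∑ φ ∈ incMaps m n, P.real {ω | ∀ j, (lowerNbrs H j).image φ ⊆ ω (φ j)} := by
  classical
  let homEvent (φ : Fin m → Fin n) : Set (Fin n → Finset (Fin n)) :=
    {ω | ∀ j, (lowerNbrs H j).image φ ⊆ ω (φ j)}
  have hcount (ω : Fin n → Finset (Fin n)) :
      (incHomCount H (graphOf ω) : ℝ) = ∑ φ ∈ incMaps m n, (homEvent φ).indicator 1 ω := by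
    simp only [homEvent, incHomCount_graphOf, Set.indicator_apply, Set.mem_ofPred_eq,
      Pi.one_apply, Finset.sum_boole]
  simp only [hcount]
  rw [integral_finsetSum _ fun _ _ => .of_finite]
  exact Finset.sum_congr rfl fun φ _ => integral_indicator_one .of_discrete

end IncreasingHoms

/-- For the Construction 1 graph `G_n` (with `D_v = |S_v|`), a graph `F`
on `{1,…,m}` and a permutation `σ` with indegrees `d_j = d_j(F_σ)`:
`E[n_≤(F_σ, G_n)] = Σ_{φ increasing} ∏_j E[(D_{φ(j)})_{d_j}] / ((φ(j)−1)_{d_j})`,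
where `(x)_d` is the falling factorial and, vertices being 0-indexed, vertex `φ(j)` has
`(φ(j) : ℕ)` predecessors. -/
theorem stmt7 (n m : ℕ) (q : ℕ → ℕ → ℝ≥0∞)
    (hq1 : ∀ v : ℕ, ∑ d ∈ Finset.range (v + 1), q v d = 1)
    (hq0 : ∀ v d : ℕ, v < d → q v d = 0)
    (F : SimpleGraph (Fin m)) (σ : Equiv.Perm (Fin m)) :
    ∫ ω, (incHomCount (relabel σ F) (graphOf ω) : ℝ) ∂(con1Measure n q)
      = ∑ φ ∈ incMaps m n, ∏ j : Fin m,
          (∫ ω, (((ω (φ j)).card).descFactorial (indeg (relabel σ F) j) : ℝ)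
              ∂(con1Measure n q))
            / (((φ j : ℕ)).descFactorial (indeg (relabel σ F) j) : ℝ) := by
  have (v : Fin n) : IsProbabilityMeasure (nbhdMeasure n q v) :=
    ⟨(nbhdMeasure_univ q v).trans (hq1 v)⟩
  have : IsProbabilityMeasure (con1Measure n q) := by unfold con1Measure; infer_instance
  rw [integral_incHomCount_graphOf]
  refine Finset.sum_congr rfl fun φ hφ => ?_
  replace hφ : StrictMono φ := mem_incMaps.1 hφ
  set T := fun j => (lowerNbrs (relabel σ F) j).image φ
  have hT (j : Fin m) : (T j).card = indeg (relabel σ F) j := by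
    rw [Finset.card_image_of_injective _ hφ.injective, card_lowerNbrs]
  calc (con1Measure n q).real {ω | ∀ j, T j ⊆ ω (φ j)}
      = ∏ j, (nbhdMeasure n q (φ j)).real {A | T j ⊆ A} :=
        measureReal_pi_forall_mem_of_injective (nbhdMeasure n q) hφ.injective
          (s := fun j => {A | T j ⊆ A}) fun _ => .of_discrete
    _ = _ := Finset.prod_congr rfl fun j _ => by
        rw [nbhdMeasure_real_superset q _ (image_lowerNbrs_subset_Iio _ hφ j), hT, con1Measure,
          integral_comp_eval (μ := nbhdMeasure n q)
            (f := fun A => (A.card.descFactorial (indeg (relabel σ F) j) : ℝ))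
            Integrable.of_finite.aestronglyMeasurable]
end

section
/- Let G_n, n ≥ 2, be the random graphs of Construction 1 built from distributions ν_n, with D_n = |S_n|, and suppose D_n/n converges in distribution to a probability measure ν on [0,1] as n → ∞. Then for every finite simple graph F with vertex set {1,…,m}, E[t(F, G_n)] → t_F as n → ∞, where t_F = (1/m!) Σ_σ ∏_{j=1}^m M_{d_j(F_σ)}, the sum being over all permutations σ of {1,…,m}. -/
open MeasureTheory Filter
open scoped ENNReal

/-- `n(F,G)`: the number of homomorphisms `F → G`. -/
noncomputable def homCount {m n : ℕ} (F : SimpleGraph (Fin m)) (G : SimpleGraph (Fin n)) : ℕ :=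
  Nat.card {φ : Fin m → Fin n // ∀ i j, F.Adj i j → G.Adj (φ i) (φ j)}

/-! `E[t(F, G_n)]` is the average over all maps `x : V(F) → [n]` of the probability that `x` is a
homomorphism into `G_n`. Non-injective maps have vanishing density. For an injective `x`, direct
each edge of `F` towards the endpoint that `x` places later: `x` is a homomorphism iff every random
set `S_{x j}` contains the images of the in-neighbours of `j`, and these events are independent.
The probability that `S_v` contains `d` prescribed vertices is the normalised factorial moment
`E[C(D_v, d)] / C(v, d)`, which tends to `M_d` because `D_v / v → ν`. The error made by replacing
each factor by its limit is at most a Cesàro mean of a null sequence. The limiting product depends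
only on the order in which `x` arranges `V(F)`; averaging it over the relabellings of `V(F)` gives
`t_F`. -/

open Finset Function
open scoped BigOperators Topology

section Averages

variable {ι κ α M : Type*}

theorem norm_prod_sub_prod_le_sum {R : Type*} [NormedCommRing R] [NormOneClass R]
    (s : Finset ι) {a b : ι → R} (ha : ∀ i ∈ s, ‖a i‖ ≤ 1) (hb : ∀ i ∈ s, ‖b i‖ ≤ 1) :
    ‖∏ i ∈ s, a i - ∏ i ∈ s, b i‖ ≤ ∑ i ∈ s, ‖a i - b i‖ := by
  classical
  induction s using Finset.induction_on with
  | empty => simp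
  | insert i s hi ih =>
    simp only [forall_mem_insert] at ha hb
    have hb_prod : ‖∏ j ∈ s, b j‖ ≤ 1 :=
      (Finset.norm_prod_le s b).trans (prod_le_one (fun _ _ => norm_nonneg _) hb.2)
    rw [prod_insert hi, prod_insert hi, sum_insert hi]
    calc ‖a i * ∏ j ∈ s, a j - b i * ∏ j ∈ s, b j‖
        = ‖(a i - b i) * ∏ j ∈ s, b j + a i * (∏ j ∈ s, a j - ∏ j ∈ s, b j)‖ := by
          congr 1; ring
      _ ≤ ‖a i - b i‖ * ‖∏ j ∈ s, b j‖ + ‖a i‖ * ‖∏ j ∈ s, a j - ∏ j ∈ s, b j‖ :=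
          (norm_add_le _ _).trans (add_le_add (norm_mul_le _ _) (norm_mul_le _ _))
      _ ≤ ‖a i - b i‖ + ‖∏ j ∈ s, a j - ∏ j ∈ s, b j‖ :=
          add_le_add (mul_le_of_le_one_right (norm_nonneg _) hb_prod)
            (mul_le_of_le_one_left (norm_nonneg _) ha.1)
      _ ≤ ‖a i - b i‖ + ∑ j ∈ s, ‖a j - b j‖ := by gcongr; exact ih ha.2 hb.2

theorem expect_pi_apply [Fintype ι] [DecidableEq ι] [Fintype α] (e : α → ℝ) (i : ι) :
    𝔼 x : ι → α, e (x i) = 𝔼 a, e a := by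
  have hsum := Fintype.sum_piFinset_apply e univ i
  rw [Fintype.piFinset_univ, card_univ] at hsum
  have hcard : Fintype.card ι = (Fintype.card ι - 1) + 1 :=
    (Nat.sub_add_cancel (Fintype.card_pos_iff.2 ⟨i⟩)).symm
  rcases isEmpty_or_nonempty α with _ | _
  · have : IsEmpty (ι → α) := ⟨fun x => isEmptyElim (x i)⟩
    simp [univ_eq_empty]
  · rw [Fintype.expect_eq_sum_div_card, Fintype.expect_eq_sum_div_card, hsum, Fintype.card_fun,
      nsmul_eq_mul, Nat.cast_pow, Nat.cast_pow]
    nth_rewrite 2 [hcard]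
    rw [pow_succ]
    exact mul_div_mul_left _ _ (by positivity)

theorem expect_expect_comp_perm [AddCommMonoid M] [Module ℚ≥0 M] [Fintype ι] [DecidableEq ι]
    [Fintype α] (g : (ι → α) → M) :
    𝔼 x : ι → α, 𝔼 σ : Equiv.Perm ι, g (x ∘ σ) = 𝔼 x, g x := by
  rw [expect_comm]
  have hσ (σ : Equiv.Perm ι) : 𝔼 x : ι → α, g (x ∘ σ) = 𝔼 x, g x :=
    Fintype.expect_equiv (σ.symm.arrowCongr (Equiv.refl α)) _ _ fun _ => rfl
  simp only [hσ, Fintype.expect_const]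

theorem card_filter_injective [Fintype ι] [DecidableEq ι] [Fintype α]
    [DecidablePred (Injective : (ι → α) → Prop)] :
    #{x : ι → α | Injective x} = (Fintype.card α).descFactorial (Fintype.card ι) := by
  rw [← Fintype.card_subtype, ← Fintype.card_embedding_eq]
  exact Fintype.card_congr (Equiv.subtypeInjectiveEquivEmbedding ι α)

theorem tendsto_expect_of_injective_eq_zero [Fintype ι] [DecidableEq ι]
    {h : ∀ n, (ι → Fin n) → ℝ} {C : ℝ} (hC : ∀ n x, |h n x| ≤ C)
    (hinj : ∀ n x, Injective x → h n x = 0) :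
    Tendsto (fun n => 𝔼 x, h n x) atTop (𝓝 0) := by
  classical
  set m := Fintype.card ι
  have hdesc : Tendsto (fun n : ℕ => C * (1 - (n.descFactorial m : ℝ) / (n : ℝ) ^ m)) atTop
      (𝓝 0) := by
    have hne : ∀ᶠ n : ℕ in atTop, ((n : ℝ) ^ m) ≠ 0 := by
      filter_upwards [eventually_gt_atTop 0] with n hn
      positivity
    simpa using (((Asymptotics.isEquivalent_iff_tendsto_one hne).1
      (isEquivalent_descFactorial m)).const_sub 1).const_mul C
  refine squeeze_zero_norm' ?_ hdesc
  filter_upwards [eventually_gt_atTop 0] with n hn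
  have hcard : (#{x : ι → Fin n | ¬ Injective x} : ℝ) = (n : ℝ) ^ m - n.descFactorial m := by
    have := card_filter_add_card_filter_not (s := univ) (Injective : (ι → Fin n) → Prop)
    rw [card_filter_injective, card_univ, Fintype.card_fun, Fintype.card_fin] at this
    rw [eq_sub_iff_add_eq']
    exact_mod_cast this
  calc ‖𝔼 x, h n x‖ ≤ 𝔼 x, |h n x| := abs_expect_le _ _
    _ = (∑ x, |h n x|) / (n : ℝ) ^ m := by
        rw [Fintype.expect_eq_sum_div_card, Fintype.card_fun, Fintype.card_fin, Nat.cast_pow]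
    _ ≤ (∑ x : ι → Fin n, if ¬ Injective x then C else 0) / (n : ℝ) ^ m := by
        gcongr with x
        split_ifs with hx
        · rw [hinj n x hx, abs_zero]
        · exact hC n x
    _ = C * (1 - (n.descFactorial m : ℝ) / (n : ℝ) ^ m) := by
        rw [← sum_filter, sum_const, nsmul_eq_mul, hcard]
        field_simp

theorem tendsto_expect_of_expect_comp_perm_eq [Fintype ι] [DecidableEq ι]
    {g : ∀ n, (ι → Fin n) → ℝ} {C T : ℝ} (hC : ∀ n x, |g n x| ≤ C)
    (hT : ∀ n x, Injective x → 𝔼 σ : Equiv.Perm ι, g n (x ∘ σ) = T) :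
    Tendsto (fun n => 𝔼 x, g n x) atTop (𝓝 T) := by
  have hbound (n : ℕ) (x : ι → Fin n) : |𝔼 σ : Equiv.Perm ι, g n (x ∘ σ) - T| ≤ C + |T| :=
    (abs_sub _ _).trans <| by
      gcongr
      exact (abs_expect_le _ _).trans (expect_le univ_nonempty fun _ _ => hC _ _)
  have hzero := tendsto_expect_of_injective_eq_zero hbound
    fun n x hx => sub_eq_zero.2 (hT n x hx)
  rw [← tendsto_sub_nhds_zero_iff]
  refine hzero.congr' ?_
  filter_upwards [eventually_gt_atTop 0] with n hn
  have : NeZero n := ⟨hn.ne'⟩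
  rw [expect_sub_distrib, expect_expect_comp_perm, Fintype.expect_const]

theorem tendsto_expect_prod_sub_prod [Fintype ι] [DecidableEq ι] [Finite κ] {f : κ → ℕ → ℝ}
    {L : κ → ℝ} (hf : ∀ k v, |f k v| ≤ 1) (hL : ∀ k, Tendsto (f k) atTop (𝓝 (L k)))
    (ℓ : ∀ n, (ι → Fin n) → ι → κ) :
    Tendsto (fun n => 𝔼 x : ι → Fin n, (∏ i, f (ℓ n x i) (x i) - ∏ i, L (ℓ n x i))) atTop
      (𝓝 0) := by
  cases nonempty_fintype κ
  let e : ℕ → ℝ := fun v => ∑ k, |f k v - L k|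
  have he : Tendsto e atTop (𝓝 0) := by
    simpa using tendsto_finsetSum univ fun k _ => ((hL k).sub_const (L k)).abs
  have hL_le (k : κ) : |L k| ≤ 1 := le_of_tendsto' (hL k).abs (hf k)
  have hprod (n : ℕ) (x : ι → Fin n) :
      |∏ i, f (ℓ n x i) (x i) - ∏ i, L (ℓ n x i)| ≤ ∑ i, e (x i) :=
    (norm_prod_sub_prod_le_sum univ (a := fun i => f (ℓ n x i) (x i))
      (b := fun i => L (ℓ n x i)) (fun _ _ => hf _ _) (fun _ _ => hL_le _)).trans <|
      sum_le_sum fun i _ => single_le_sum (f := fun k => |f k (x i) - L k|)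
        (fun _ _ => abs_nonneg _) (mem_univ (ℓ n x i))
  have hcesaro : Tendsto (fun n => ∑ _i : ι, 𝔼 v : Fin n, e v) atTop (𝓝 0) := by
    have hmean (n : ℕ) : 𝔼 v : Fin n, e v = (n : ℝ)⁻¹ * ∑ v ∈ range n, e v := by
      rw [Fintype.expect_eq_sum_div_card, Fin.sum_univ_eq_sum_range, Fintype.card_fin,
        div_eq_inv_mul]
    simpa [hmean] using tendsto_finsetSum (univ : Finset ι) fun _ _ => he.cesaro
  refine squeeze_zero_norm (fun n => ?_) hcesaro
  calc ‖𝔼 x : ι → Fin n, (∏ i, f (ℓ n x i) (x i) - ∏ i, L (ℓ n x i))‖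
      ≤ 𝔼 x : ι → Fin n, |∏ i, f (ℓ n x i) (x i) - ∏ i, L (ℓ n x i)| := abs_expect_le _ _
    _ ≤ 𝔼 x : ι → Fin n, ∑ i, e (x i) := expect_le_expect fun x _ => hprod n x
    _ = ∑ _i : ι, 𝔼 v : Fin n, e v := by
        rw [expect_sum_comm]
        exact sum_congr rfl fun i _ => expect_pi_apply (fun v : Fin n => e v) i

end Averages

section InclusionProbabilities

theorem sum_Icc_apply_card {α M : Type*} [DecidableEq α] [AddCommMonoid M] (f : ℕ → M)
    {B t : Finset α} (hBt : B ⊆ t) :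
    ∑ A ∈ Icc B t, f #A = ∑ j ∈ range (#t - #B + 1), (#t - #B).choose j • f (#B + j) := by
  have hdisj {C : Finset α} (hC : C ∈ (t \ B).powerset) : Disjoint B C :=
    disjoint_of_subset_right (mem_powerset.1 hC) disjoint_sdiff
  have hinj : Set.InjOn (B ∪ ·) ((t \ B).powerset : Set (Finset α)) := fun C hC D hD hCD => by
    dsimp only at hCD
    rw [← union_sdiff_cancel_left (hdisj hC), ← union_sdiff_cancel_left (hdisj hD), hCD]
  rw [Icc_eq_image_powerset hBt, sum_image hinj, ← card_sdiff_of_subset hBt,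
    ← sum_powerset_apply_card (fun j => f (#B + j))]
  exact sum_congr rfl fun C hC => by rw [card_union_of_disjoint (hdisj hC)]

/-- The probability that a random subset `S` of a `v`-element set contains `d` given elements, when
`P(#S = k) = w k` and, given its cardinality, `S` is uniform. Both binomial coefficients vanish for
`v < d`, and the value is then `0` because `0 / 0 = 0`. -/
noncomputable def inclusionProb (w : ℕ → ℝ) (v d : ℕ) : ℝ :=
  ∑ k ∈ range (v + 1), w k * ((k.choose d : ℝ) / v.choose d)

theorem inclusionProb_zero_right (w : ℕ → ℝ) (v : ℕ) :
    inclusionProb w v 0 = ∑ k ∈ range (v + 1), w k := by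
  simp [inclusionProb]

theorem abs_inclusionProb_le_one {w : ℕ → ℝ} {v : ℕ} (hw0 : ∀ k, 0 ≤ w k)
    (hw1 : ∑ k ∈ range (v + 1), w k = 1) (d : ℕ) : |inclusionProb w v d| ≤ 1 := by
  rw [inclusionProb, abs_of_nonneg (sum_nonneg fun k _ => mul_nonneg (hw0 k) (by positivity)),
    ← hw1]
  refine sum_le_sum fun k hk => mul_le_of_le_one_right (hw0 k) ?_
  refine div_le_one_of_le₀ ?_ (Nat.cast_nonneg _)
  exact_mod_cast Nat.choose_le_choose d (Nat.lt_succ_iff.1 (mem_range.1 hk))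

theorem sum_Icc_div_choose_card {α : Type*} [DecidableEq α] (w : ℕ → ℝ) {B t : Finset α}
    (hBt : B ⊆ t) : ∑ A ∈ Icc B t, w #A / (#t).choose #A = inclusionProb w #t #B := by
  have hcard : #B ≤ #t := card_le_card hBt
  have hsplit : #t + 1 = #B + (#t - #B + 1) := by lia
  have hsmall : ∑ k ∈ range #B, w k * ((k.choose #B : ℝ) / (#t).choose #B) = 0 :=
    sum_eq_zero fun k hk => by simp [Nat.choose_eq_zero_of_lt (mem_range.1 hk)]
  rw [sum_Icc_apply_card (fun k => w k / (#t).choose k) hBt, inclusionProb, hsplit,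
    sum_range_add (fun k => w k * ((k.choose #B : ℝ) / (#t).choose #B)), hsmall, zero_add]
  refine sum_congr rfl fun j hj => ?_
  have hj : #B + j ≤ #t := by have := mem_range.1 hj; lia
  have hchoose : ((#t).choose (#B + j) * (#B + j).choose #B : ℝ)
      = (#t).choose #B * (#t - #B).choose j := by
    have := Nat.choose_mul (n := #t) (Nat.le_add_right #B j)
    rw [Nat.add_sub_cancel_left] at this
    exact_mod_cast this
  have hpos₁ : ((#t).choose (#B + j) : ℝ) ≠ 0 := by exact_mod_cast (Nat.choose_pos hj).ne'
  have hpos₂ : ((#t).choose #B : ℝ) ≠ 0 := by exact_mod_cast (Nat.choose_pos hcard).ne'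
  rw [nsmul_eq_mul]
  field_simp
  linear_combination -w (#B + j) * hchoose

theorem cast_choose_div_choose_eq_prod (k v d : ℕ) :
    (k.choose d : ℝ) / v.choose d = ∏ i ∈ range d, ((k - i : ℕ) / (v - i : ℕ) : ℝ) := by
  rw [prod_div_distrib, ← Nat.cast_prod, ← Nat.cast_prod, ← Nat.descFactorial_eq_prod_range,
    ← Nat.descFactorial_eq_prod_range, Nat.descFactorial_eq_factorial_mul_choose,
    Nat.descFactorial_eq_factorial_mul_choose, Nat.cast_mul, Nat.cast_mul, mul_div_mul_left]
  exact_mod_cast (Nat.factorial_pos d).ne'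

theorem abs_sub_div_sub_sub_div_succ_le {k v i : ℕ} (hkv : k ≤ v) (hiv : i < v) :
    |((k - i : ℕ) / (v - i : ℕ) : ℝ) - k / (v + 1)| ≤ (i + 1) / (v - i) := by
  have hvi : (0 : ℝ) < v - i := sub_pos.2 (by exact_mod_cast hiv)
  have hki : ((k - i : ℕ) : ℝ) ≤ k := by exact_mod_cast Nat.sub_le k i
  have hki' : (k : ℝ) ≤ (k - i : ℕ) + i := by exact_mod_cast le_tsub_add
  have hkv' : ((k - i : ℕ) : ℝ) ≤ v - i := by
    rw [← Nat.cast_sub hiv.le]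
    exact_mod_cast Nat.sub_le_sub_right hkv i
  rw [Nat.cast_sub hiv.le, abs_sub_le_iff]
  constructor
  · rw [sub_le_iff_le_add]
    calc ((k - i : ℕ) : ℝ) / (v - i)
        = (k - i : ℕ) / (v + 1) * ((i + 1) / (v - i)) + (k - i : ℕ) / (v + 1) := by
          field_simp
          ring
      _ ≤ 1 * ((i + 1) / (v - i)) + k / (v + 1) := by
          gcongr
          exact div_le_one_of_le₀ (by linarith) (by positivity)
      _ = (i + 1) / (v - i) + k / (v + 1) := by rw [one_mul]
  · calc (k : ℝ) / (v + 1) - (k - i : ℕ) / (v - i)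
        ≤ k / (v - i) - (k - i : ℕ) / (v - i) := by gcongr; linarith
      _ = (k - (k - i : ℕ)) / (v - i) := by rw [sub_div]
      _ ≤ (i + 1) / (v - i) := by gcongr; linarith

theorem abs_choose_div_choose_sub_pow_le {k v d : ℕ} (hkv : k ≤ v) (hdv : d < v) :
    |(k.choose d : ℝ) / v.choose d - ((k : ℝ) / (v + 1)) ^ d| ≤ d * ((d + 1) / (v - d)) := by
  have hv : (0 : ℝ) < v - d := sub_pos.2 (by exact_mod_cast hdv)
  have hkv' : (k : ℝ) ≤ v := by exact_mod_cast hkv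
  have hfactor (i : ℕ) : ‖((k - i : ℕ) / (v - i : ℕ) : ℝ)‖ ≤ 1 := by
    rw [Real.norm_of_nonneg (by positivity)]
    exact div_le_one_of_le₀ (by exact_mod_cast Nat.sub_le_sub_right hkv i) (by positivity)
  have hlimit : ‖(k : ℝ) / (v + 1)‖ ≤ 1 := by
    rw [Real.norm_of_nonneg (by positivity)]
    exact div_le_one_of_le₀ (by linarith) (by positivity)
  have hpow : ((k : ℝ) / (v + 1)) ^ d = ∏ _i ∈ range d, (k : ℝ) / (v + 1) := by
    rw [prod_const, card_range]
  rw [cast_choose_div_choose_eq_prod, hpow]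
  calc |∏ i ∈ range d, ((k - i : ℕ) / (v - i : ℕ) : ℝ) - ∏ _i ∈ range d, (k : ℝ) / (v + 1)|
      ≤ ∑ i ∈ range d, |((k - i : ℕ) / (v - i : ℕ) : ℝ) - k / (v + 1)| :=
        norm_prod_sub_prod_le_sum _ (fun i _ => hfactor i) fun _ _ => hlimit
    _ ≤ ∑ _i ∈ range d, ((d : ℝ) + 1) / (v - d) := by
        refine sum_le_sum fun i hi => ?_
        have hid : i < d := mem_range.1 hi
        refine (abs_sub_div_sub_sub_div_succ_le hkv (hid.trans hdv)).trans ?_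
        gcongr
    _ = d * ((d + 1) / (v - d)) := by rw [sum_const, card_range, nsmul_eq_mul]

section WeakConvergence

variable {p : ℕ → ℕ → ℝ} {ν : Measure ℝ}

theorem tendsto_sum_of_continuousOn_Icc (hν : ∀ᵐ x ∂ν, x ∈ Set.Icc (0 : ℝ) 1)
    (hp : ∀ f : BoundedContinuousFunction ℝ ℝ, Tendsto
      (fun v : ℕ => ∑ k ∈ range (v + 1), p v k * f (k / (v + 1))) atTop (𝓝 (∫ x, f x ∂ν)))
    {f : ℝ → ℝ} (hf : ContinuousOn f (Set.Icc 0 1)) :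
    Tendsto (fun v : ℕ => ∑ k ∈ range (v + 1), p v k * f (k / (v + 1))) atTop
      (𝓝 (∫ x, f x ∂ν)) := by
  let g : BoundedContinuousFunction ℝ ℝ :=
    (BoundedContinuousFunction.mkOfCompact ⟨_, hf.domRestrict⟩).compContinuous
      ⟨Set.projIcc 0 1 zero_le_one, continuous_projIcc⟩
  have hg {x : ℝ} (hx : x ∈ Set.Icc (0 : ℝ) 1) : g x = f x :=
    congrArg (fun y : Set.Icc (0 : ℝ) 1 => f y) (Set.projIcc_of_mem zero_le_one hx)
  rw [← integral_congr_ae (hν.mono fun x hx => hg hx)]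
  refine (hp g).congr fun v => sum_congr rfl fun k hk => ?_
  have hkv : (k : ℝ) ≤ v := by exact_mod_cast Nat.lt_succ_iff.1 (mem_range.1 hk)
  rw [hg ⟨by positivity, div_le_one_of_le₀ (by linarith) (by positivity)⟩]

theorem tendsto_inclusionProb (hp0 : ∀ v k, 0 ≤ p v k)
    (hp1 : ∀ v, ∑ k ∈ range (v + 1), p v k = 1) (hν : ∀ᵐ x ∂ν, x ∈ Set.Icc (0 : ℝ) 1)
    (hp : ∀ f : BoundedContinuousFunction ℝ ℝ, Tendsto
      (fun v : ℕ => ∑ k ∈ range (v + 1), p v k * f (k / (v + 1))) atTop (𝓝 (∫ x, f x ∂ν)))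
    (d : ℕ) :
    Tendsto (fun v => inclusionProb (p v) v d) atTop (𝓝 (∫ x, x ^ d ∂ν)) := by
  have hmoment := tendsto_sum_of_continuousOn_Icc hν hp (continuous_pow d).continuousOn
  have herror : Tendsto (fun v : ℕ => (d : ℝ) * ((d + 1) / (v - d))) atTop (𝓝 0) := by
    have : Tendsto (fun v : ℕ => (v : ℝ) - d) atTop atTop :=
      tendsto_atTop_add_const_right _ _ tendsto_natCast_atTop_atTop
    simpa using (this.const_div_atTop ((d : ℝ) + 1)).const_mul (d : ℝ)
  refine (tendsto_iff_of_dist ?_).2 hmoment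
  refine squeeze_zero' (.of_forall fun _ => dist_nonneg) ?_ herror
  filter_upwards [eventually_gt_atTop d] with v hdv
  rw [Real.dist_eq, inclusionProb, ← sum_sub_distrib]
  calc |∑ k ∈ range (v + 1),
          (p v k * ((k.choose d : ℝ) / v.choose d) - p v k * ((k : ℝ) / (v + 1)) ^ d)|
      ≤ ∑ k ∈ range (v + 1),
          |p v k * ((k.choose d : ℝ) / v.choose d) - p v k * ((k : ℝ) / (v + 1)) ^ d| :=
        abs_sum_le_sum_abs _ _
    _ ≤ ∑ k ∈ range (v + 1), p v k * (d * ((d + 1) / (v - d))) := by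
        refine sum_le_sum fun k hk => ?_
        rw [← mul_sub, abs_mul, abs_of_nonneg (hp0 v k)]
        exact mul_le_mul_of_nonneg_left (abs_choose_div_choose_sub_pow_le
          (Nat.lt_succ_iff.1 (mem_range.1 hk)) hdv) (hp0 v k)
    _ = d * ((d + 1) / (v - d)) := by rw [← sum_mul, hp1, one_mul]

end WeakConvergence

end InclusionProbabilities

section RandomNeighborhoods

variable {n : ℕ} {q : ℕ → ℕ → ℝ≥0∞}

instance (n : ℕ) : DiscreteMeasurableSpace (Finset (Fin n)) := ⟨fun _ => trivial⟩

theorem ne_top_of_sum_eq_one {ι : Type*} {s : Finset ι} {w : ι → ℝ≥0∞} (hw : ∑ i ∈ s, w i = 1) :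
    ∀ i ∈ s, w i ≠ ∞ := fun _ hi =>
  (ENNReal.lt_top_of_sum_ne_top (hw ▸ ENNReal.one_ne_top) hi).ne

theorem sum_toReal_eq_one {ι : Type*} {s : Finset ι} {w : ι → ℝ≥0∞} (hw : ∑ i ∈ s, w i = 1) :
    ∑ i ∈ s, (w i).toReal = 1 := by
  rw [← ENNReal.toReal_sum (ne_top_of_sum_eq_one hw), hw, ENNReal.toReal_one]

theorem nbhdMeasure_real_setOf_subset {v : Fin n} (hq : ∑ d ∈ range (v + 1), q v d = 1)
    {B : Finset (Fin n)} (hB : B ⊆ Iio v) :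
    (nbhdMeasure n q v).real {A | B ⊆ A} = inclusionProb (fun d => (q v d).toReal) v #B := by
  have hIcc : Icc B (Iio v) = ({A | A ⊆ Iio v ∧ B ⊆ A} : Finset (Finset (Fin n))) := by
    ext A
    simp [and_comm]
  have happly : nbhdMeasure n q v {A | B ⊆ A} =
      ∑ A ∈ Icc B (Iio v), q v #A / ((v : ℕ).choose #A : ℝ≥0∞) := by
    rw [nbhdMeasure, Measure.finsetSum_apply, hIcc, sum_filter]
    refine sum_congr rfl fun A _ => ?_
    by_cases hA : A ⊆ Iio v <;> by_cases hBA : B ⊆ A <;> simp [hA, hBA]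
  have hfin : ∀ A ∈ Icc B (Iio v), q v #A / ((v : ℕ).choose #A : ℝ≥0∞) ≠ ∞ := fun A hA => by
    have hle : #A ≤ (v : ℕ) := by simpa using card_le_card (mem_Icc.1 hA).2
    exact ENNReal.div_ne_top (ne_top_of_sum_eq_one hq _ (mem_range.2 (Nat.lt_succ_of_le hle)))
      (by exact_mod_cast (Nat.choose_pos hle).ne')
  have hreal := sum_Icc_div_choose_card (fun d => (q v d).toReal) hB
  rw [Fin.card_Iio] at hreal
  rw [measureReal_def, happly, ENNReal.toReal_sum hfin, ← hreal]
  simp only [ENNReal.toReal_div, ENNReal.toReal_natCast]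

theorem isProbabilityMeasure_nbhdMeasure {v : Fin n}
    (hq : ∑ d ∈ range (v + 1), q v d = 1) : IsProbabilityMeasure (nbhdMeasure n q v) := by
  have huniv := nbhdMeasure_real_setOf_subset hq (empty_subset (Iio v))
  rw [card_empty, inclusionProb_zero_right, sum_toReal_eq_one hq, measureReal_def,
    ENNReal.toReal_eq_one_iff] at huniv
  exact ⟨by simpa using huniv⟩

theorem isProbabilityMeasure_con1Measure (hq : ∀ v, ∑ d ∈ range (v + 1), q v d = 1) :
    IsProbabilityMeasure (con1Measure n q) := by
  have (v : Fin n) := isProbabilityMeasure_nbhdMeasure (hq v)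
  unfold con1Measure
  infer_instance

theorem pi_real_setOf_forall_comp_mem {ι κ X : Type*} [Fintype ι] [Fintype κ] [MeasurableSpace X]
    (μ : κ → Measure X) [∀ v, IsProbabilityMeasure (μ v)] {x : ι → κ} (hx : Injective x)
    (s : ι → Set X) :
    (Measure.pi μ).real {ω | ∀ j, ω (x j) ∈ s j} = ∏ j, (μ (x j)).real (s j) := by
  have hset : {ω : κ → X | ∀ j, ω (x j) ∈ s j}
      = Set.univ.pi (extend x s fun _ => Set.univ) := by
    ext ω
    refine ⟨fun h v _ => ?_, fun h j => by simpa [hx.extend_apply] using h (x j) trivial⟩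
    by_cases hv : ∃ j, x j = v
    · obtain ⟨j, rfl⟩ := hv
      rw [hx.extend_apply]
      exact h j
    · rw [extend_apply' _ _ _ hv]
      trivial
  rw [hset, measureReal_def, Measure.pi_pi, ENNReal.toReal_prod]
  refine (Fintype.prod_of_injective x hx _ _ (fun v hv => ?_) fun j => ?_).symm
  · rw [extend_apply' _ _ _ hv, measure_univ, ENNReal.toReal_one]
  · rw [hx.extend_apply, measureReal_def]

end RandomNeighborhoods

section Homomorphisms

variable {V α : Type*} (F : SimpleGraph V)

/-- The neighbours of `j` in `F` that `x` places before `j`: the vertices joined to `j` by an edge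
directed towards `j` when the vertices of `F` are ordered by their positions `x`. -/
noncomputable def earlierNeighbors [Fintype V] [LinearOrder α] (x : V → α) (j : V) : Finset V :=
  open Classical in {i | F.Adj i j ∧ x i < x j}

theorem mem_earlierNeighbors [Fintype V] [LinearOrder α] {x : V → α} {i j : V} :
    i ∈ earlierNeighbors F x j ↔ F.Adj i j ∧ x i < x j := by
  simp [earlierNeighbors]

/-- The event that `x` is a homomorphism from `F` to the random graph `G_n` of Construction 1. -/
def homEvent {n : ℕ} (x : V → Fin n) : Set (Fin n → Finset (Fin n)) :=
  {ω | ∀ i j, F.Adj i j → (graphOf ω).Adj (x i) (x j)}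

theorem homEvent_eq_of_injective [Fintype V] {n : ℕ} {x : V → Fin n} (hx : Injective x) :
    homEvent F x = {ω | ∀ j, ω (x j) ∈ {A | (earlierNeighbors F x j).image x ⊆ A}} := by
  ext ω
  simp only [homEvent, graphOf, Set.mem_ofPred_eq, image_subset_iff, mem_earlierNeighbors]
  constructor
  · rintro h j i ⟨hij, hlt⟩
    exact ((h i j hij).resolve_right fun h' => hlt.not_gt h'.1).2
  · intro h i j hij
    rcases (hx.ne hij.ne).lt_or_gt with hlt | hlt
    · exact .inl ⟨hlt, h j i ⟨hij, hlt⟩⟩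
    · exact .inr ⟨hlt, h i j ⟨hij.symm, hlt⟩⟩

theorem con1Measure_real_homEvent [Fintype V] {n : ℕ} {q : ℕ → ℕ → ℝ≥0∞}
    (hq : ∀ v, ∑ d ∈ range (v + 1), q v d = 1) {x : V → Fin n} (hx : Injective x) :
    (con1Measure n q).real (homEvent F x) =
      ∏ j, inclusionProb (fun d => (q (x j) d).toReal) (x j) #(earlierNeighbors F x j) := by
  have (v : Fin n) := isProbabilityMeasure_nbhdMeasure (hq v)
  rw [homEvent_eq_of_injective F hx, con1Measure, pi_real_setOf_forall_comp_mem _ hx]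
  refine prod_congr rfl fun j _ => ?_
  have hsub : (earlierNeighbors F x j).image x ⊆ Iio (x j) := image_subset_iff.2 fun i hi =>
    mem_Iio.2 ((mem_earlierNeighbors F).1 hi).2
  rw [nbhdMeasure_real_setOf_subset (hq _) hsub, card_image_of_injective _ hx]

theorem tendsto_expect_con1Measure_real_homEvent_sub_prod [Fintype V] [DecidableEq V]
    {q : ℕ → ℕ → ℝ≥0∞} (hq : ∀ v, ∑ d ∈ range (v + 1), q v d = 1) :
    Tendsto (fun n => 𝔼 x : V → Fin n, ((con1Measure n q).real (homEvent F x) -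
      ∏ j, inclusionProb (fun d => (q (x j) d).toReal) (x j) #(earlierNeighbors F x j))) atTop
      (𝓝 0) := by
  refine tendsto_expect_of_injective_eq_zero (C := 1 + 1) (fun n x => ?_) fun n x hx =>
    sub_eq_zero.2 (con1Measure_real_homEvent F hq hx)
  have := isProbabilityMeasure_con1Measure (n := n) hq
  refine (abs_sub _ _).trans (add_le_add ?_ ?_)
  · rw [abs_of_nonneg measureReal_nonneg]
    exact measureReal_le_one
  · rw [abs_prod]
    exact prod_le_one (fun _ _ => abs_nonneg _) fun _ _ =>
      abs_inclusionProb_le_one (fun _ => ENNReal.toReal_nonneg) (sum_toReal_eq_one (hq _)) _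

theorem integral_natCard_subtype {Ω A : Type*} [MeasurableSpace Ω] [Fintype A] {μ : Measure Ω}
    [IsFiniteMeasure μ] {P : A → Set Ω} (hP : ∀ a, MeasurableSet (P a)) :
    ∫ ω, (Nat.card {a // ω ∈ P a} : ℝ) ∂μ = ∑ a, μ.real (P a) := by
  classical
  have hcard (ω : Ω) : (Nat.card {a // ω ∈ P a} : ℝ) = ∑ a, (P a).indicator 1 ω := by
    rw [Nat.card_eq_fintype_card, Fintype.card_subtype, natCast_card_filter]
    rfl
  simp_rw [hcard]
  rw [integral_finsetSum _ fun a _ => (integrable_const 1).indicator (hP a)]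
  exact sum_congr rfl fun a _ => integral_indicator_one (hP a)

theorem integral_homCount_div_pow {m n : ℕ} (F : SimpleGraph (Fin m))
    (μ : Measure (Fin n → Finset (Fin n))) [IsFiniteMeasure μ] :
    ∫ ω, (homCount F (graphOf ω) : ℝ) / (n : ℝ) ^ m ∂μ =
      𝔼 x : Fin m → Fin n, μ.real (homEvent F x) := by
  rw [integral_div, Fintype.expect_eq_sum_div_card, Fintype.card_fun, Fintype.card_fin,
    Fintype.card_fin, Nat.cast_pow, ← integral_natCard_subtype fun _ => .of_discrete]
  rfl

theorem card_earlierNeighbors_comp_perm {m : ℕ} [LinearOrder α] (F : SimpleGraph (Fin m))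
    {y : Fin m → α} (hy : StrictMono y) (σ : Equiv.Perm (Fin m)) (j : Fin m) :
    #(earlierNeighbors F (y ∘ σ) j) = indeg (relabel σ F) (σ j) := by
  classical
  rw [indeg, Nat.card_eq_fintype_card, Fintype.card_subtype]
  refine card_equiv σ fun i => ?_
  simp [mem_earlierNeighbors, relabel, hy.lt_iff_lt, and_comm]

theorem expect_perm_prod_earlierNeighbors {m : ℕ} [LinearOrder α] (F : SimpleGraph (Fin m))
    (M : ℕ → ℝ) {x : Fin m → α} (hx : Injective x) :
    𝔼 σ : Equiv.Perm (Fin m), ∏ j, M #(earlierNeighbors F (x ∘ σ) j) =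
      𝔼 σ : Equiv.Perm (Fin m), ∏ j, M (indeg (relabel σ F) j) := by
  have hsort : StrictMono (x ∘ Tuple.sort x) :=
    (Tuple.monotone_sort x).strictMono_of_injective (hx.comp (Tuple.sort x).injective)
  refine (Fintype.expect_equiv (Equiv.mulLeft (Tuple.sort x)) _ _ fun σ => ?_).symm
  rw [← Equiv.prod_comp σ]
  exact prod_congr rfl fun j _ => congrArg M (card_earlierNeighbors_comp_perm F hsort σ j).symm

theorem tendsto_expect_prod_earlierNeighbors {m : ℕ} (F : SimpleGraph (Fin m)) (M : ℕ → ℝ) :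
    Tendsto (fun n => 𝔼 x : Fin m → Fin n, ∏ j, M #(earlierNeighbors F x j)) atTop
      (𝓝 (𝔼 σ : Equiv.Perm (Fin m), ∏ j, M (indeg (relabel σ F) j))) := by
  refine tendsto_expect_of_expect_comp_perm_eq
    (C := ∑ c : Fin m → Finset (Fin m), |∏ j, M #(c j)|) (fun n x => ?_)
    fun n x hx => expect_perm_prod_earlierNeighbors F M hx
  exact single_le_sum (f := fun c : Fin m → Finset (Fin m) => |∏ j, M #(c j)|)
    (fun _ _ => abs_nonneg _) (mem_univ (earlierNeighbors F x))

end Homomorphisms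

/-- Suppose the indegree distributions of Construction 1 satisfy
`D_n/n → ν` in distribution (here `q (n-1)` is the indegree distribution `ν_n` of the
`n`-th vertex, which has `n−1` predecessors). Then for every graph `F` on `{1,…,m}`,
`E[t(F, G_n)] → t_F = (1/m!) Σ_σ ∏_j M_{d_j(F_σ)}`, where `t(F,G) = n(F,G)/n^m` and
`M_d = ∫₀¹ x^d dν(x)`. -/
theorem stmt9 (ν : Measure ℝ) [IsProbabilityMeasure ν] (hν : ν (Set.Icc 0 1) = 1)
    (q : ℕ → ℕ → ℝ≥0∞)
    (hq1 : ∀ v : ℕ, ∑ d ∈ Finset.range (v + 1), q v d = 1)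
    (hq0 : ∀ v d : ℕ, v < d → q v d = 0)
    (hconv : ∀ f : BoundedContinuousFunction ℝ ℝ,
      Tendsto (fun k => ∑ d ∈ Finset.range k, (q (k - 1) d).toReal * f ((d : ℝ) / k))
        atTop (nhds (∫ x, f x ∂ν)))
    (m : ℕ) (F : SimpleGraph (Fin m)) :
    Tendsto
      (fun n => ∫ ω, (homCount F (graphOf ω) : ℝ) / (n : ℝ) ^ m ∂(con1Measure n q))
      atTop
      (nhds ((1 / (Nat.factorial m : ℝ)) *
        ∑ σ : Equiv.Perm (Fin m), ∏ j : Fin m, ∫ x, x ^ (indeg (relabel σ F) j) ∂ν)) := by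
  have hprob (n : ℕ) : IsProbabilityMeasure (con1Measure n q) :=
    isProbabilityMeasure_con1Measure hq1
  have hmoment := tendsto_inclusionProb (p := fun v d => (q v d).toReal)
    (fun _ _ => ENNReal.toReal_nonneg) (fun v => sum_toReal_eq_one (hq1 v))
    ((prob_compl_eq_zero_iff measurableSet_Icc).2 hν)
    fun f => by simpa [comp_def] using (hconv f).comp (tendsto_add_atTop_nat 1)
  have hhom := tendsto_expect_con1Measure_real_homEvent_sub_prod F hq1
  have hlim := tendsto_expect_prod_sub_prod
    (f := fun B v => inclusionProb (fun d => (q v d).toReal) v #B)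
    (fun B v => abs_inclusionProb_le_one (fun _ => ENNReal.toReal_nonneg)
      (sum_toReal_eq_one (hq1 v)) #B)
    (fun B => hmoment #B) fun _ x => earlierNeighbors F x
  have hsym := tendsto_expect_prod_earlierNeighbors F fun d => ∫ x, x ^ d ∂ν
  have hmean := Fintype.expect_eq_sum_div_card
    fun σ : Equiv.Perm (Fin m) => ∏ j, ∫ x, x ^ indeg (relabel σ F) j ∂ν
  rw [Fintype.card_perm, Fintype.card_fin, ← one_div_mul_eq_div] at hmean
  rw [← hmean]
  simpa only [integral_homCount_div_pow, expect_sub_distrib, sub_add_sub_cancel, sub_add_cancel,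
    zero_add] using (hhom.add hlim).add hsym
end
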